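/- Let σ > 0, κ > 0, α > 0, μ₀ ∈ ℝ and r > μ₀ + σ²/2; let n be the unique positive root of (σ²/2)n² + μ₀n − r = 0, set x₀* := ln(κn/(n−1)) and A(y) := (κ/(αn(n−1)))·(κn/(n−1))^{−n}·(1 − e^{−αny}). Define w₂(x,y) := A(y − (x−x₀*)/α)·e^{n x₀*} + (1/α)(e^x − e^{x₀*}) − (κ/α)(x − x₀*) and w₁(x,y) := (1/α)e^x(1 − e^{−αy}) − κy. Then for every (x,y) ∈ ℝ² both identities hold: −α·∂ₓw₂(x,y) − ∂ᵧw₂(x,y) + e^x − κ = 0 and −α·∂ₓw₁(x,y) − ∂ᵧw₁(x,y) + e^x − κ = 0. -/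

import Mathlib

/-!
The operator `w ↦ -α ∂ₓw - ∂ᵧw` differentiates along the direction `-(α, 1)`. The argument
`y - (x - x₀) / α` is constant in that direction, so the `A`-term of `w₂` contributes nothing
for any differentiable `A`, and the remaining terms of `w₂` contribute exactly `-e^x + κ`.
For `w₁` the `x`-derivative gives `-e^x (1 - e^{-αy})` and the `y`-derivative gives
`-e^x e^{-αy} + κ`, with the same total. Each partial derivative is computed as a `HasDerivAt`,
so that no value of `deriv` is a junk value.
-/


/-- On the selling regions, the branches `w₂` and `w₁` of the explicit candidate value
function of the full-information benchmark satisfy the gradient constraint with equality: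
`−α ∂ₓw − ∂ᵧw + e^x − κ = 0`. -/
theorem stmt12 (σ κ α μ₀ r n x₀ : ℝ) (hσ : 0 < σ) (hκ : 0 < κ) (hα : 0 < α)
    (hr : μ₀ + σ ^ 2 / 2 < r)
    (hn : 0 < n) (hroot : σ ^ 2 / 2 * n ^ 2 + μ₀ * n - r = 0)
    (hx₀ : x₀ = Real.log (κ * n / (n - 1)))
    (A : ℝ → ℝ)
    (hA : ∀ y : ℝ, A y = κ / (α * n * (n - 1)) * (κ * n / (n - 1)) ^ (-n) *
      (1 - Real.exp (-(α * n * y))))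
    (w₂ w₁ : ℝ → ℝ → ℝ)
    (hw₂ : ∀ x y : ℝ, w₂ x y = A (y - (x - x₀) / α) * Real.exp (n * x₀) +
      (1 / α) * (Real.exp x - Real.exp x₀) - κ / α * (x - x₀))
    (hw₁ : ∀ x y : ℝ, w₁ x y = (1 / α) * Real.exp x * (1 - Real.exp (-(α * y))) - κ * y) :
    ∀ x y : ℝ,
      (-α * deriv (fun x' => w₂ x' y) x - deriv (fun y' => w₂ x y') y +
        Real.exp x - κ = 0) ∧
      (-α * deriv (fun x' => w₁ x' y) x - deriv (fun y' => w₁ x y') y +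
        Real.exp x - κ = 0) := by
  have hαne : α ≠ 0 := hα.ne'
  have hAd : Differentiable ℝ A := by
    rw [funext hA]
    fun_prop
  intro x y
  constructor
  · have hAz := (hAd (y - (x - x₀) / α)).hasDerivAt
    have hx : HasDerivAt (fun x' => w₂ x' y)
        (deriv A (y - (x - x₀) / α) * (-(1 / α)) * Real.exp (n * x₀) +
          (1 / α) * Real.exp x - κ / α * 1) x := by
      have hlin : HasDerivAt (fun x' : ℝ => y - (x' - x₀) / α) (-(1 / α)) x :=
        (((hasDerivAt_id x).sub_const x₀).div_const α).const_sub y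
      simp only [hw₂]
      exact (((hAz.comp x hlin).mul_const _).add
        (((Real.hasDerivAt_exp x).sub_const _).const_mul _)).sub
        (((hasDerivAt_id x).sub_const x₀).const_mul _)
    have hy : HasDerivAt (fun y' => w₂ x y')
        (deriv A (y - (x - x₀) / α) * 1 * Real.exp (n * x₀)) y := by
      have hlin : HasDerivAt (fun y' : ℝ => y' - (x - x₀) / α) 1 y :=
        (hasDerivAt_id y).sub_const _
      simp only [hw₂]
      exact (((hAz.comp y hlin).mul_const _).add_const _).sub_const _
    rw [hx.deriv, hy.deriv]
    field_simp
    ring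
  · have hx : HasDerivAt (fun x' => w₁ x' y)
        ((1 / α) * Real.exp x * (1 - Real.exp (-(α * y)))) x := by
      simp only [hw₁]
      exact (((Real.hasDerivAt_exp x).const_mul _).mul_const _).sub_const _
    have hy : HasDerivAt (fun y' => w₁ x y')
        ((1 / α) * Real.exp x * (-(Real.exp (-(α * y)) * (-(α * 1)))) - κ * 1) y := by
      simp only [hw₁]
      exact ((((hasDerivAt_id y).const_mul α).neg.exp.const_sub 1).const_mul _).sub
        ((hasDerivAt_id y).const_mul κ)
    rw [hx.deriv, hy.deriv]
    field_simp
    ring
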